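/- Let H' be a torsion-free algebra over C[q,q⁻¹] embedded (as in the strict case) inside a torsion-free Hopf algebra H via H' = { η ∈ H | δ_n(η) ∈ (q−1)ⁿH^{⊗n} ∀n ∈ ℕ }. Suppose a ∈ H' satisfies ε(a) = 0 and a² ≡ a mod (q−1)H'. Then a ≡ 0 mod (q−1)H'. -/

import Mathlib

/- STATEMENT 19: in H' = { a ∈ H | δ_n(a) ∈ (q−1)ⁿH^{⊗n} ∀n } inside a torsion-free Hopf
   algebra H over ℂ[q,q⁻¹]: if a ∈ H' satisfies ε(a) = 0 and a² ≡ a mod (q−1)H', then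
   a ≡ 0 mod (q−1)H'. -/

open scoped TensorProduct
open PiTensorProduct

namespace GQDP

/-- The ground ring `ℂ[q,q⁻¹]` of complex Laurent polynomials. -/
abbrev R : Type := LaurentPolynomial ℂ

/-- The indeterminate `q`. -/
noncomputable def q : R := LaurentPolynomial.T 1

variable (H : Type*) [Ring H] [HopfAlgebra R H] [NoZeroSMulDivisors R H]

/-- The `n`-fold tensor power `H^{⊗n}`. -/
abbrev TP (n : ℕ) := ⨂[R] (_ : Fin n), H

/-- The "tensor product" of two `R`-submodules of `H` inside `H ⊗[R] H`. -/
noncomputable def tsub (A B : Submodule R H) : Submodule R (H ⊗[R] H) :=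
  Submodule.span R {z | ∃ a ∈ A, ∃ b ∈ B, z = a ⊗ₜ[R] b}

/-- The "tensor product" of a family of submodules `p i ⊆ H` inside `H^{⊗n}`: the additive
    subgroup generated by the pure tensors with `i`-th entry in `p i` (for `n ≥ 1` this
    coincides with the `R`-span of such pure tensors). -/
noncomputable def tgrp {n : ℕ} (p : Fin n → Submodule R H) : AddSubgroup (TP H n) :=
  AddSubgroup.closure {z | ∃ f : Fin n → H, (∀ i, f i ∈ p i) ∧ z = PiTensorProduct.tprod R f}

/-- The canonical map `H ⊗ H^{⊗n} → H^{⊗(n+1)}`. -/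
noncomputable def step (n : ℕ) : (H ⊗[R] TP H n) →ₗ[R] TP H (n + 1) :=
  ((PiTensorProduct.reindex R (fun _ : Fin 1 ⊕ Fin n => H)
      (finSumFinEquiv.trans (finCongr (Nat.add_comm 1 n)))).toLinearMap
    ∘ₗ (PiTensorProduct.tmulEquiv (ι := Fin 1) (ι₂ := Fin n) R H).toLinearMap)
    ∘ₗ (LinearMap.rTensor (TP H n)
      (PiTensorProduct.subsingletonEquiv (0 : Fin 1) : (⨂[R] (_ : Fin 1), H) ≃ₗ[R] H).symm.toLinearMap)

/-- The iterated coproduct `Δⁿ : H → H^{⊗n}`, with `Δ⁰ := ε` and `Δ^{n+1} := (id ⊗ Δⁿ) ∘ Δ`. -/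
noncomputable def DeltaIter : (n : ℕ) → H →ₗ[R] TP H n
  | 0 => (PiTensorProduct.isEmptyEquiv (ι := Fin 0)).symm.toLinearMap
          ∘ₗ (Coalgebra.counit : H →ₗ[R] R)
  | n + 1 => step H n ∘ₗ LinearMap.lTensor H (DeltaIter n)
              ∘ₗ (Coalgebra.comul : H →ₗ[R] H ⊗[R] H)

/-- `δ_n := (id − η∘ε)^{⊗n} ∘ Δⁿ : H → H^{⊗n}`. -/
noncomputable def deltaN (n : ℕ) : H →ₗ[R] TP H n :=
  (PiTensorProduct.map fun _ =>
      (LinearMap.id : H →ₗ[R] H) - Algebra.linearMap R H ∘ₗ (Coalgebra.counit : H →ₗ[R] R))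
    ∘ₗ DeltaIter H n

/-- Drinfeld's subalgebra `H' = { a ∈ H | δ_n(a) ∈ (q−1)ⁿ H^{⊗n} for all n }`. -/
noncomputable def Hprime : Set H :=
  {a | ∀ n : ℕ, ∃ y : TP H n, deltaN H n a = ((q - 1) ^ n) • y}

set_option linter.unusedSectionVars false

/-- The projection `id - η ∘ ε`. -/
noncomputable def pP : H →ₗ[R] H :=
  (LinearMap.id : H →ₗ[R] H) - Algebra.linearMap R H ∘ₗ (Coalgebra.counit : H →ₗ[R] R)

/-- The projection `η ∘ ε`. -/
noncomputable def pE : H →ₗ[R] H :=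
  Algebra.linearMap R H ∘ₗ (Coalgebra.counit : H →ₗ[R] R)

theorem deltaN_eq (n : ℕ) :
    deltaN H n = (PiTensorProduct.map fun _ => pP H) ∘ₗ DeltaIter H n := rfl

theorem step_tprod (n : ℕ) (x : H) (f : Fin n → H) :
    step H n (x ⊗ₜ[R] PiTensorProduct.tprod R f) =
      PiTensorProduct.tprod R (Fin.cons x f : Fin (n + 1) → H) := by
  simp only [step, LinearMap.comp_apply, LinearMap.rTensor_tmul, LinearEquiv.coe_coe,
    subsingletonEquiv_symm_apply', tmulEquiv_apply]
  erw [reindex_tprod]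
  congr 1
  funext i
  refine Fin.cases ?_ (fun j => ?_) i
  · have : (finSumFinEquiv.trans (finCongr (Nat.add_comm 1 n))).symm (0 : Fin (n+1))
        = Sum.inl 0 := by
      rw [Equiv.symm_apply_eq]; ext; simp
    rw [this]; simp
  · have : (finSumFinEquiv.trans (finCongr (Nat.add_comm 1 n))).symm (j.succ : Fin (n+1))
        = Sum.inr j := by
      rw [Equiv.symm_apply_eq]; ext; simp [Nat.add_comm]
    rw [this]; simp

/-- `step` as a linear equivalence. -/
noncomputable def stepE (n : ℕ) : (H ⊗[R] TP H n) ≃ₗ[R] TP H (n + 1) :=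
  ((LinearEquiv.rTensor (TP H n)
      (PiTensorProduct.subsingletonEquiv (0 : Fin 1) : (⨂[R] (_ : Fin 1), H) ≃ₗ[R] H).symm).trans
    (PiTensorProduct.tmulEquiv (ι := Fin 1) (ι₂ := Fin n) R H)).trans
    (PiTensorProduct.reindex R (fun _ : Fin 1 ⊕ Fin n => H)
      (finSumFinEquiv.trans (finCongr (Nat.add_comm 1 n))))

theorem stepE_apply (n : ℕ) (z : H ⊗[R] TP H n) : stepE H n z = step H n z := rfl

theorem map_step (n : ℕ) (f : Fin (n + 1) → (H →ₗ[R] H)) :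
    PiTensorProduct.map f ∘ₗ step H n =
      step H n ∘ₗ TensorProduct.map (f 0) (PiTensorProduct.map fun i => f i.succ) := by
  refine TensorProduct.ext' fun x y => ?_
  induction y using PiTensorProduct.induction_on with
  | smul_tprod r g =>
    simp only [TensorProduct.tmul_smul, map_smul, LinearMap.comp_apply, step_tprod, map_tprod,
      TensorProduct.map_tmul]
    congr 2
    funext i
    refine Fin.cases ?_ (fun j => ?_) i <;> simp
  | add a b ha hb => rw [TensorProduct.tmul_add, map_add, map_add, ha, hb]

theorem step_mul (n : ℕ) (u v : H ⊗[R] TP H n) :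
    step H n (u * v) = step H n u * step H n v := by
  induction u using TensorProduct.induction_on with
  | zero => simp
  | add a b ha hb => rw [add_mul, map_add, map_add, add_mul, ha, hb]
  | tmul x y =>
  induction v using TensorProduct.induction_on with
  | zero => simp
  | add a b ha hb => rw [mul_add, map_add, map_add, mul_add, ha, hb]
  | tmul x' y' =>
  rw [Algebra.TensorProduct.tmul_mul_tmul]
  induction y using PiTensorProduct.induction_on with
  | add a b ha hb =>
    rw [add_mul, TensorProduct.tmul_add, TensorProduct.tmul_add, map_add, map_add, add_mul, ha, hb]
  | smul_tprod r g =>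
  induction y' using PiTensorProduct.induction_on with
  | add a b ha hb =>
    rw [mul_add, TensorProduct.tmul_add, TensorProduct.tmul_add, map_add, map_add, mul_add, ha, hb]
  | smul_tprod r' g' =>
    rw [smul_tprod_mul_smul_tprod]
    simp only [TensorProduct.tmul_smul, map_smul, step_tprod, smul_tprod_mul_smul_tprod]
    congr 2
    funext i
    refine Fin.cases ?_ (fun j => ?_) i <;> simp

theorem lTensor_mul' {M : Type*} [Ring M] [Algebra R M] (φ : H →ₗ[R] M)
    (h : ∀ x y, φ (x * y) = φ x * φ y) (u v : H ⊗[R] H) :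
    LinearMap.lTensor H φ (u * v) = LinearMap.lTensor H φ u * LinearMap.lTensor H φ v := by
  induction u using TensorProduct.induction_on with
  | zero => simp
  | add a b ha hb => rw [add_mul, map_add, map_add, add_mul, ha, hb]
  | tmul x y =>
  induction v using TensorProduct.induction_on with
  | zero => simp
  | add a b ha hb => rw [mul_add, map_add, map_add, mul_add, ha, hb]
  | tmul x' y' =>
    simp [Algebra.TensorProduct.tmul_mul_tmul, h]

theorem DeltaIter_mul (n : ℕ) : ∀ x y : H,
    DeltaIter H n (x * y) = DeltaIter H n x * DeltaIter H n y := by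
  induction n with
  | zero =>
    intro x y
    have key : ∀ r : R, (PiTensorProduct.isEmptyEquiv (R := R) (s := fun _ => H)
        (Fin 0)).symm r = r • (1 : TP H 0) := by
      intro r
      rw [LinearEquiv.symm_apply_eq, map_smul, one_def, isEmptyEquiv_apply_tprod]
      simp
    simp only [DeltaIter, LinearMap.comp_apply, LinearEquiv.coe_coe, Bialgebra.counit_mul]
    rw [key, key, key, smul_mul_smul_comm, one_mul]
  | succ n ih =>
    intro x y
    simp only [DeltaIter, LinearMap.comp_apply, Bialgebra.comul_mul]
    rw [lTensor_mul' H _ ih, step_mul]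

/-- The components of `DeltaIter` all come from smaller `deltaN`. -/
theorem comp_eq (n : ℕ) : ∀ (p : Fin n → Bool) (k : ℕ),
    k = (∑ i, if p i then 1 else 0) →
    ∃ ι : TP H k →ₗ[R] TP H n,
      (PiTensorProduct.map fun i => if p i then pP H else pE H) ∘ₗ DeltaIter H n =
        ι ∘ₗ deltaN H k := by
  induction n with
  | zero =>
    intro p k hk
    simp at hk
    subst hk
    refine ⟨LinearMap.id, ?_⟩
    rw [deltaN_eq, LinearMap.id_comp]
    congr 2
    funext i
    exact i.elim0
  | succ n ih =>
    intro p k hk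
    rw [Fin.sum_univ_succ] at hk
    obtain ⟨m, hm⟩ : ∃ m, m = (∑ i : Fin n, if p i.succ then 1 else 0) := ⟨_, rfl⟩
    obtain ⟨ι, hι⟩ := ih (fun i => p i.succ) m hm
    rw [← hm] at hk
    clear hm
    have e1 : (PiTensorProduct.map fun i => if p i then pP H else pE H) ∘ₗ DeltaIter H (n + 1) =
        step H n ∘ₗ TensorProduct.map (if p 0 then pP H else pE H) (ι ∘ₗ deltaN H m) ∘ₗ
          (Coalgebra.comul : H →ₗ[R] H ⊗[R] H) := by
      rw [← hι]
      simp only [DeltaIter]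
      rw [← LinearMap.comp_assoc, map_step, LinearMap.comp_assoc, ← LinearMap.comp_assoc _ _
        (TensorProduct.map _ _), LinearMap.map_comp_lTensor]
    rw [e1]
    by_cases h0 : p 0
    · simp only [h0, if_true] at hk ⊢
      rw [Nat.add_comm] at hk
      subst hk
      refine ⟨step H n ∘ₗ LinearMap.lTensor H ι ∘ₗ (stepE H m).symm.toLinearMap, ?_⟩
      have e2 : deltaN H (m + 1) = step H m ∘ₗ TensorProduct.map (pP H) (deltaN H m) ∘ₗ
          (Coalgebra.comul : H →ₗ[R] H ⊗[R] H) := by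
        rw [deltaN_eq, deltaN_eq]
        simp only [DeltaIter]
        rw [← LinearMap.comp_assoc, map_step, LinearMap.comp_assoc, ← LinearMap.comp_assoc _ _
          (TensorProduct.map _ _), LinearMap.map_comp_lTensor]
      rw [e2]
      ext x
      simp only [LinearMap.comp_apply, ← stepE_apply, LinearEquiv.coe_coe,
        LinearEquiv.symm_apply_apply]
      rw [← LinearMap.comp_apply (LinearMap.lTensor H ι), LinearMap.lTensor_comp_map]
    · simp only [h0, if_false, Bool.false_eq_true, zero_add] at hk ⊢
      subst hk
      refine ⟨step H n ∘ₗ (TensorProduct.mk R H (TP H n) 1) ∘ₗ ι, ?_⟩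
      ext x
      have e3 : TensorProduct.map (pE H) (ι ∘ₗ deltaN H k) =
          LinearMap.rTensor (TP H n) (Algebra.linearMap R H) ∘ₗ
            LinearMap.lTensor R (ι ∘ₗ deltaN H k) ∘ₗ
            LinearMap.rTensor H (Coalgebra.counit : H →ₗ[R] R) := by
        refine TensorProduct.ext' fun x y => ?_
        simp [pE]
      rw [e3]
      simp only [LinearMap.comp_apply, Coalgebra.rTensor_counit_comul]
      simp

theorem map_mul_zero (n : ℕ) (f g : Fin n → (H →ₗ[R] H)) (i : Fin n)
    (hf : f i = pE H) (hg : g i = pE H) (u v : TP H n) :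
    PiTensorProduct.map (fun _ => pP H) (PiTensorProduct.map f u * PiTensorProduct.map g v) = 0 := by
  induction u using PiTensorProduct.induction_on with
  | add a b ha hb => rw [map_add, add_mul, map_add, ha, hb, add_zero]
  | smul_tprod r x =>
  induction v using PiTensorProduct.induction_on with
  | add a b ha hb => rw [map_add, mul_add, map_add, ha, hb, add_zero]
  | smul_tprod r' y =>
    rw [map_smul, map_smul, map_tprod, map_tprod, smul_tprod_mul_smul_tprod, map_smul, map_tprod]
    rw [MultilinearMap.map_coord_zero _ i, smul_zero]
    simp only [Pi.mul_apply, hf, hg]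
    simp [pP, pE, Bialgebra.counit_mul, Algebra.linearMap_apply]

theorem Delta_sum (n : ℕ) (u : TP H n) :
    u = ∑ s : Finset (Fin n), PiTensorProduct.map
      (fun i => if (decide (i ∈ s) : Bool) then pP H else pE H) u := by
  have h := (PiTensorProduct.mapMultilinear R (fun _ : Fin n => H) (fun _ : Fin n => H)).map_add_univ
    (fun _ => pP H) (fun _ => pE H)
  have h1 : ((fun _ => pP H) + (fun _ => pE H) : Fin n → (H →ₗ[R] H)) =
      fun _ => LinearMap.id := by
    funext i; simp [pP, pE]
  rw [h1] at h
  simp only [mapMultilinear_apply] at h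
  rw [PiTensorProduct.map_id] at h
  have h2 := congrArg (fun F => F u) h
  simp only [LinearMap.id_apply, LinearMap.sum_apply] at h2
  refine h2.trans (Finset.sum_congr rfl fun s _ => ?_)
  congr 2
  funext i
  simp [Finset.piecewise]

theorem comp_dvd (n : ℕ) (s : Finset (Fin n)) (a : H) (t : R)
    (h : ∃ y : TP H s.card, deltaN H s.card a = t • y) :
    ∃ y : TP H n, PiTensorProduct.map
      (fun i => if (decide (i ∈ s) : Bool) then pP H else pE H) (DeltaIter H n a) = t • y := by
  obtain ⟨ι, hι⟩ := comp_eq H n (fun i => decide (i ∈ s)) s.card (by simp)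
  obtain ⟨y, hy⟩ := h
  refine ⟨ι y, ?_⟩
  have := congrArg (fun F => F a) hι
  simp only [LinearMap.comp_apply] at this
  rw [this, hy, map_smul]

theorem deltaN_zero_apply (a : H) (h : Coalgebra.counit (R := R) a = 0) : deltaN H 0 a = 0 := by
  simp [deltaN, DeltaIter, h]

theorem sq_dvd (n : ℕ) (a : H) (ha : a ∈ Hprime H) (h0 : Coalgebra.counit (R := R) a = 0)
    (ih : ∀ m < n, ∃ y : TP H m, deltaN H m a = ((q - 1) ^ (m + 1)) • y) :
    ∃ y : TP H n, deltaN H n (a * a) = ((q - 1) ^ (n + 1)) • y := by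
  let D : Finset (Fin n) → TP H n := fun s => PiTensorProduct.map
      (fun i => if (decide (i ∈ s) : Bool) then pP H else pE H) (DeltaIter H n a)
  have hD : DeltaIter H n a = ∑ s, D s := Delta_sum H n _
  have hprod : ∀ s s' : Finset (Fin n), ∃ y : TP H n,
      PiTensorProduct.map (fun _ => pP H) (D s * D s') = ((q - 1) ^ (n + 1)) • y := by
    intro s s'
    by_cases hcov : ∃ i, i ∉ s ∧ i ∉ s'
    · obtain ⟨i, hi, hi'⟩ := hcov
      exact ⟨0, by rw [smul_zero]; exact map_mul_zero H n _ _ i (by simp [hi]) (by simp [hi']) _ _⟩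
    have hcov' : s ∪ s' = Finset.univ := by
      ext i; by_contra hh; exact hcov ⟨i, by simpa using hh⟩
    have hcard : n ≤ s.card + s'.card := by
      have := Finset.card_union_le s s'
      rw [hcov'] at this; simpa using this
    have hempty : ∀ w : Finset (Fin n), w.card = 0 → D w = 0 := by
      intro w hw
      obtain ⟨y, hy⟩ := comp_dvd H n w a 0 ⟨0, by rw [hw, deltaN_zero_apply H a h0]; simp⟩
      rw [zero_smul] at hy
      exact hy
    by_cases c1 : s.card = 0
    · exact ⟨0, by rw [hempty s c1]; simp⟩
    by_cases c2 : s'.card = 0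
    · exact ⟨0, by rw [hempty s' c2]; simp⟩
    have key : ∃ k l, n + 1 ≤ k + l ∧ (∃ y, D s = (q - 1) ^ k • y) ∧
        (∃ y, D s' = (q - 1) ^ l • y) := by
      by_cases c3 : n + 1 ≤ s.card + s'.card
      · exact ⟨_, _, c3, comp_dvd H n s a _ (ha _), comp_dvd H n s' a _ (ha _)⟩
      · exact ⟨s.card + 1, s'.card, by omega, comp_dvd H n s a _ (ih _ (by omega)),
          comp_dvd H n s' a _ (ha _)⟩
    obtain ⟨k, l, hkl, ⟨y, hy⟩, ⟨z, hz⟩⟩ := key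
    refine ⟨(q - 1) ^ (k + l - (n + 1)) • PiTensorProduct.map (fun _ => pP H) (y * z), ?_⟩
    rw [hy, hz, smul_mul_smul_comm, map_smul, smul_smul, ← pow_add, ← pow_add]
    congr 2
    omega
  choose Y hY using hprod
  refine ⟨∑ s, ∑ s', Y s s', ?_⟩
  rw [deltaN_eq, LinearMap.comp_apply, DeltaIter_mul, hD, Finset.sum_mul, map_sum, Finset.smul_sum]
  refine Finset.sum_congr rfl fun s _ => ?_
  rw [Finset.mul_sum, map_sum, Finset.smul_sum]
  exact Finset.sum_congr rfl fun s' _ => hY s s'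

theorem deltaN_dvd (a c : H) (ha : a ∈ Hprime H) (h0 : Coalgebra.counit (R := R) a = 0)
    (hc : c ∈ Hprime H) (hac : a * a - a = (q - 1) • c) (n : ℕ) :
    ∃ y : TP H n, deltaN H n a = ((q - 1) ^ (n + 1)) • y := by
  induction n using Nat.strong_induction_on with
  | _ n ih =>
    obtain ⟨y, hy⟩ := sq_dvd H n a ha h0 ih
    obtain ⟨z, hz⟩ := hc n
    refine ⟨y - z, ?_⟩
    have : a = a * a - (q - 1) • c := by rw [← hac]; abel
    rw [this, map_sub, map_smul, hy, hz, smul_smul, smul_sub, ← pow_succ']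

theorem dedekind_R : IsDedekindDomain R :=
  IsLocalization.isDedekindDomain (Polynomial ℂ)
    (M := Submonoid.powers (Polynomial.X : Polynomial ℂ))
    (powers_le_nonZeroDivisors_of_noZeroDivisors Polynomial.X_ne_zero) _

theorem flat_H : Module.Flat R H := by
  have := dedekind_R
  infer_instance

theorem q_sub_one_ne : (q - 1 : R) ≠ 0 := by
  intro h
  have h1 : (LaurentPolynomial.T 1 : R) = LaurentPolynomial.T 0 := by
    rw [LaurentPolynomial.T_zero]; exact sub_eq_zero.mp h
  have h2 := congrArg LaurentPolynomial.degree h1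
  rw [LaurentPolynomial.degree_T, LaurentPolynomial.degree_T] at h2
  exact absurd (WithBot.coe_injective h2) (by norm_num)

theorem flat_TP (n : ℕ) : Module.Flat R (TP H n) := by
  have := flat_H H
  induction n with
  | zero => exact Module.Flat.of_linearEquiv (PiTensorProduct.isEmptyEquiv (Fin 0))
  | succ n ih => exact Module.Flat.of_linearEquiv (stepE H n).symm

theorem TP_cancel (n : ℕ) (x y : TP H n) (h : (q - 1 : R) • x = (q - 1 : R) • y) : x = y := by
  have := flat_TP H n
  exact Module.Flat.isSMulRegular_of_nonZeroDivisors
    (mem_nonZeroDivisors_of_ne_zero q_sub_one_ne) h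

theorem dvd_of_one (a : H) (h0 : Coalgebra.counit (R := R) a = 0)
    (h : ∃ y : TP H 1, deltaN H 1 a = (q - 1 : R) • y) : ∃ d : H, a = (q - 1 : R) • d := by
  obtain ⟨y, hy⟩ := h
  have key : (PiTensorProduct.subsingletonEquiv (R := R) (s := fun _ => H) (0 : Fin 1)).toLinearMap
      ∘ₗ deltaN H 1 = pP H := by
    have e : (PiTensorProduct.subsingletonEquiv (R := R) (s := fun _ => H)
        (0 : Fin 1)).toLinearMap ∘ₗ (PiTensorProduct.map fun _ => pP H) ∘ₗ step H 0 ∘ₗ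
        LinearMap.lTensor H (PiTensorProduct.isEmptyEquiv (R := R) (s := fun _ => H)
          (Fin 0)).symm.toLinearMap = pP H ∘ₗ (TensorProduct.rid R H).toLinearMap := by
      refine TensorProduct.ext' fun x r => ?_
      have kk : (PiTensorProduct.isEmptyEquiv (R := R) (s := fun _ => H)
        (Fin 0)).symm r = r • PiTensorProduct.tprod R (fun _ => (1 : H)) := by
        rw [LinearEquiv.symm_apply_eq, map_smul, isEmptyEquiv_apply_tprod]
        simp
      simp only [LinearMap.comp_apply, LinearMap.lTensor_tmul, LinearEquiv.coe_coe, kk,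
        TensorProduct.tmul_smul, map_smul, step_tprod, map_tprod, subsingletonEquiv_apply_tprod,
        TensorProduct.rid_tmul]
      simp
    ext x
    have e' := congrArg (fun F => F (LinearMap.lTensor H (Coalgebra.counit : H →ₗ[R] R)
      (Coalgebra.comul x))) e
    simp only [LinearMap.comp_apply, Coalgebra.lTensor_counit_comul] at e'
    rw [deltaN_eq]
    simp only [DeltaIter, LinearMap.comp_apply, LinearMap.lTensor_comp]
    rw [Coalgebra.lTensor_counit_comul, e']
    simp
  have k2 := congrArg (fun F => F a) key
  simp only [LinearMap.comp_apply, hy, map_smul] at k2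
  refine ⟨_, Eq.trans ?_ k2.symm⟩
  simp [pP, h0]

/-- An idempotent-mod-(q−1) element of `H'` with vanishing counit is
    divisible by `(q−1)` within `H'`. -/
theorem idempotent_in_Hprime (a : H)
    (ha : a ∈ Hprime H)
    (haeps : Coalgebra.counit (R := R) a = 0)
    (hidem : ∃ c ∈ Hprime H, a * a - a = (q - 1) • c) :
    ∃ d ∈ Hprime H, a = (q - 1) • d := by
  obtain ⟨c, hc, hac⟩ := hidem
  have key := deltaN_dvd H a c ha haeps hc hac
  obtain ⟨d, hd⟩ := dvd_of_one H a haeps (by simpa using ha 1)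
  refine ⟨d, fun n => ?_, hd⟩
  obtain ⟨y, hy⟩ := key n
  refine ⟨y, TP_cancel H n _ _ ?_⟩
  rw [← map_smul, ← hd, hy, smul_smul, ← pow_succ']

end GQDP
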